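/- Let V be a real reflexive Banach space, let V₁, …, V_N be closed subspaces of V, and let |·| be a continuous seminorm on V such that there exists C₀ > 0 with inf_{φ ∈ ker|·|} ‖v + φ‖ ≤ C₀|v| for all v ∈ V. Let F : V → ℝ be convex and Gâteaux differentiable with Gâteaux derivative F', with F(v + φ) = F(v) for all v ∈ V and φ ∈ ker|·|. Let q > 1 and suppose F is locally q-weakly smooth: for every ‖·‖-bounded convex subset K of V there exists L_K > 0 such that d_F(w; v) ≤ L_K ‖w‖^q whenever v ∈ K and v + w ∈ K. Then for every j ∈ {1, …, N}, every |·|-bounded convex subset K of V, and every ‖·‖-bounded convex subset K_j of V_j with 0 ∈ K_j, there exists M > 0 such that d_F(w_j; v) ≤ M ‖w_j‖^q for all v ∈ K and w_j ∈ K_j. -/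

import Mathlib

/-- `f` is the Gâteaux derivative of `F` at `v`. -/
def HasGateauxDerivAt {V : Type*} [NormedAddCommGroup V] [NormedSpace ℝ V]
    (F : V → ℝ) (f : V →L[ℝ] ℝ) (v : V) : Prop :=
  ∀ w : V, Filter.Tendsto (fun t : ℝ => (F (v + t • w) - F v) / t)
    (nhdsWithin (0 : ℝ) {(0 : ℝ)}ᶜ) (nhds (f w))

/-!
A period of `F` is also a period of its Gâteaux derivative and of the Bregman distance in the base
point. The kernel of the seminorm consists of periods, and shifting each point of a
seminorm-bounded set along this kernel moves the set into a ball. The smoothness constant of a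
larger ball therefore serves for the whole set.
-/

open Metric

section Seminorm

variable {𝕜 E : Type*} [SeminormedRing 𝕜] [SeminormedAddCommGroup E] [Module 𝕜 E]
  (p : Seminorm 𝕜 E)

theorem exists_norm_add_lt_of_iInf_ker_lt {v : E} {r : ℝ}
    (h : (⨅ φ : {x : E // p x = 0}, ‖v + (φ : E)‖) < r) :
    ∃ φ : E, p φ = 0 ∧ ‖v + φ‖ < r := by
  have : Nonempty {x : E // p x = 0} := ⟨⟨0, map_zero p⟩⟩
  obtain ⟨⟨φ, hφ⟩, hlt⟩ := exists_lt_of_ciInf_lt h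
  exact ⟨φ, hφ, hlt⟩

theorem exists_forall_exists_ker_norm_add_le {C : ℝ}
    (hC : ∀ v : E, (⨅ φ : {x : E // p x = 0}, ‖v + (φ : E)‖) ≤ C * p v)
    {K : Set E} (hK : ∃ M : ℝ, ∀ v ∈ K, p v ≤ M) :
    ∃ R : ℝ, ∀ v ∈ K, ∃ φ : E, p φ = 0 ∧ ‖v + φ‖ ≤ R := by
  obtain ⟨M, hM⟩ := hK
  refine ⟨|C| * M + 1, fun v hv => ?_⟩
  have hlt : (⨅ φ : {x : E // p x = 0}, ‖v + (φ : E)‖) < |C| * M + 1 :=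
    calc (⨅ φ : {x : E // p x = 0}, ‖v + (φ : E)‖)
      _ ≤ C * p v := hC v
      _ ≤ |C| * p v := mul_le_mul_of_nonneg_right (le_abs_self C) (apply_nonneg p v)
      _ ≤ |C| * M := mul_le_mul_of_nonneg_left (hM v hv) (abs_nonneg C)
      _ < |C| * M + 1 := lt_add_one _
  obtain ⟨φ, hφ, hnorm⟩ := exists_norm_add_lt_of_iInf_ker_lt p hlt
  exact ⟨φ, hφ, hnorm.le⟩

end Seminorm

section Bregman

variable {V : Type*} [NormedAddCommGroup V] [NormedSpace ℝ V]
  {F : V → ℝ} {F' : V → V →L[ℝ] ℝ}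

namespace HasGateauxDerivAt

variable {f g : V →L[ℝ] ℝ} {v φ : V}

theorem unique (hf : HasGateauxDerivAt F f v) (hg : HasGateauxDerivAt F g v) : f = g :=
  ContinuousLinearMap.ext fun w => tendsto_nhds_unique (hf w) (hg w)

theorem add_period (hf : HasGateauxDerivAt F f v) (hφ : Function.Periodic F φ) :
    HasGateauxDerivAt F f (v + φ) := fun w => by
  simpa only [add_right_comm v φ, hφ _] using hf w

end HasGateauxDerivAt

/-- The Bregman distance `d_F(w; v)` of `F` from the base point `v` in the direction `w`. The
derivative `F'` is passed explicitly and the base point `v` comes before the direction `w`. -/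
def bregmanDist (F : V → ℝ) (F' : V → V →L[ℝ] ℝ) (v w : V) : ℝ :=
  F (v + w) - F v - F' v w

theorem periodic_gateauxDeriv (hF' : ∀ v, HasGateauxDerivAt F (F' v) v) {φ : V}
    (hφ : Function.Periodic F φ) : Function.Periodic F' φ := fun v =>
  (hF' (v + φ)).unique ((hF' v).add_period hφ)

theorem bregmanDist_add_period (hF' : ∀ v, HasGateauxDerivAt F (F' v) v) {φ : V}
    (hφ : Function.Periodic F φ) (v w : V) :
    bregmanDist F F' (v + φ) w = bregmanDist F F' v w := by
  simp only [bregmanDist, add_right_comm v φ w, hφ _, periodic_gateauxDeriv hF' hφ v]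

theorem bregmanDist_le_of_periodic_translates (hF' : ∀ v, HasGateauxDerivAt F (F' v) v)
    {K W : Set V} {R B : ℝ} {b : V → ℝ}
    (hK : ∀ v ∈ K, ∃ φ, Function.Periodic F φ ∧ ‖v + φ‖ ≤ R) (hW : ∀ w ∈ W, ‖w‖ ≤ B)
    (hb : ∀ v w : V, v ∈ closedBall 0 (R + B) → v + w ∈ closedBall 0 (R + B) →
      bregmanDist F F' v w ≤ b w) :
    ∀ v ∈ K, ∀ w ∈ W, bregmanDist F F' v w ≤ b w := by
  intro v hv w hw
  obtain ⟨φ, hφ, hvφ⟩ := hK v hv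
  have hbase : v + φ ∈ closedBall (0 : V) (R + B) :=
    mem_closedBall_zero_iff.2 (by linarith [hW w hw, norm_nonneg w])
  have hend : v + φ + w ∈ closedBall (0 : V) (R + B) :=
    mem_closedBall_zero_iff.2 (norm_add_le_of_le hvφ (hW w hw))
  exact (bregmanDist_add_period hF' hφ v w).symm.trans_le (hb _ w hbase hend)

theorem stmt_6_general (p : Seminorm ℝ V) {C : ℝ}
    (hC : ∀ v : V, (⨅ φ : {x : V // p x = 0}, ‖v + (φ : V)‖) ≤ C * p v)
    (hF' : ∀ v, HasGateauxDerivAt F (F' v) v)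
    (hinv : ∀ φ, p φ = 0 → Function.Periodic F φ) {ω : V → ℝ}
    (hsmooth : ∀ r : ℝ, ∃ L : ℝ, 0 < L ∧ ∀ v w : V,
      v ∈ closedBall 0 r → v + w ∈ closedBall 0 r → bregmanDist F F' v w ≤ L * ω w)
    {K W : Set V} (hK : ∃ M : ℝ, ∀ v ∈ K, p v ≤ M) (hW : ∃ M : ℝ, ∀ w ∈ W, ‖w‖ ≤ M) :
    ∃ M : ℝ, 0 < M ∧ ∀ v ∈ K, ∀ w ∈ W, bregmanDist F F' v w ≤ M * ω w := by
  obtain ⟨R, hR⟩ := exists_forall_exists_ker_norm_add_le p hC hK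
  obtain ⟨B, hB⟩ := hW
  obtain ⟨L, hL, hLsmooth⟩ := hsmooth (R + B)
  have hKper : ∀ v ∈ K, ∃ φ, Function.Periodic F φ ∧ ‖v + φ‖ ≤ R := fun v hv =>
    let ⟨φ, hφ, hnorm⟩ := hR v hv
    ⟨φ, hinv φ hφ, hnorm⟩
  exact ⟨L, hL, bregmanDist_le_of_periodic_translates hF' hKper hB hLsmooth⟩

end Bregman

/-- local `q`-weak smoothness of a semicoercive convex functional
transfers to local smoothness on seminorm-bounded sets (Proposition 4.8). -/
theorem stmt_6 {V : Type*} [NormedAddCommGroup V] [NormedSpace ℝ V] [CompleteSpace V]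
    (hrefl : Function.Surjective (NormedSpace.inclusionInDoubleDual ℝ V))
    (N : ℕ) (Vj : Fin N → Submodule ℝ V) (hVjc : ∀ j, IsClosed ((Vj j : Set V)))
    (p : Seminorm ℝ V) (hpc : Continuous (p : V → ℝ))
    (C₀ : ℝ) (hC₀ : 0 < C₀)
    (hglob : ∀ v : V, (⨅ φ : {x : V // p x = 0}, ‖v + (φ : V)‖) ≤ C₀ * p v)
    (F : V → ℝ) (hconv : ConvexOn ℝ Set.univ F)
    (F' : V → V →L[ℝ] ℝ) (hF' : ∀ v : V, HasGateauxDerivAt F (F' v) v)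
    (hinv : ∀ v φ : V, p φ = 0 → F (v + φ) = F v)
    (q : ℝ) (hq : 1 < q)
    (hsmooth : ∀ K : Set V, Convex ℝ K → (∃ M : ℝ, ∀ v ∈ K, ‖v‖ ≤ M) →
      ∃ L : ℝ, 0 < L ∧ ∀ v w : V, v ∈ K → v + w ∈ K →
        F (v + w) - F v - F' v w ≤ L * ‖w‖ ^ q) :
    ∀ j : Fin N, ∀ K : Set V, Convex ℝ K → (∃ M : ℝ, ∀ v ∈ K, p v ≤ M) →
      ∀ Kj : Set V, Kj ⊆ (Vj j : Set V) → Convex ℝ Kj →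
        (∃ M : ℝ, ∀ v ∈ Kj, ‖v‖ ≤ M) → (0 : V) ∈ Kj →
        ∃ M : ℝ, 0 < M ∧ ∀ v ∈ K, ∀ wj ∈ Kj,
          F (v + wj) - F v - F' v wj ≤ M * ‖wj‖ ^ q :=
  fun _ _ _ hK _ _ _ hKj _ => stmt_6_general p hglob hF' (fun φ hφ v => hinv v φ hφ)
    (fun r => hsmooth (closedBall 0 r) (convex_closedBall 0 r)
      ⟨r, fun _ => mem_closedBall_zero_iff.1⟩) hK hKj
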